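/- Let N ⊆ M_m be a unital *-subalgebra and ρ ∈ M_m a density. Then D(ρ‖N) = D(ρ‖E(ρ)) = H(E(ρ)) − H(ρ), and E(ρ) is the unique density σ ∈ N achieving D(ρ‖σ) = D(ρ‖N). -/

import Mathlib

open scoped ENNReal Classical ComplexOrder
open Matrix

noncomputable section

namespace GJL

variable {n : Type*} [Fintype n] [DecidableEq n]

/-- `Mat n` is the matrix *-algebra with rows and columns indexed by `n`. -/
abbrev Mat (n : Type*) [Fintype n] [DecidableEq n] := Matrix n n ℂ

/-- A density matrix: positive semidefinite with trace one. -/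
def IsDensity (ρ : Mat n) : Prop := ρ.PosSemidef ∧ ρ.trace = 1

/-- The real part of the (matrix) trace. -/
def traceR (A : Mat n) : ℝ := (A.trace).re

/-- Real matrix powers via the continuous functional calculus.  For positive
semidefinite matrices and negative exponents this is the generalized inverse
power on the support, since `(0 : ℝ) ^ r = 0` for `r ≠ 0`. -/
def mpow (A : Mat n) (r : ℝ) : Mat n := cfc (fun x : ℝ => x ^ r) A

/-- Matrix logarithm on the support (`Real.log 0 = 0`). -/
def mlog (A : Mat n) : Mat n := cfc Real.log A

/-- Schatten `p`-norm `(Tr ((x* x)^(p/2)))^(1/p)`. -/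
def snorm (p : ℝ) (x : Mat n) : ℝ := (traceR (mpow (xᴴ * x) (p/2))) ^ (1/p)

/-- Operator norm `‖x‖_∞`. -/
def opNorm (x : Mat n) : ℝ := ‖(Matrix.toEuclideanCLM (𝕜 := ℂ) x : EuclideanSpace ℂ n →L[ℂ] EuclideanSpace ℂ n)‖

/-- The support projection of `ρ` is dominated by that of `σ` (for positive
semidefinite matrices: `ker σ ⊆ ker ρ`). -/
def suppLe (ρ σ : Mat n) : Prop := ∀ v, σ.mulVec v = 0 → ρ.mulVec v = 0

/-- `e` is the support projection of `ρ`. -/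
def IsSupportProj (ρ e : Mat n) : Prop :=
  e.IsHermitian ∧ e * e = e ∧ ∀ v, e.mulVec v = 0 ↔ ρ.mulVec v = 0

/-- `D_∞(ρ‖σ) = log min {λ ≥ 0 | ρ ≤ λ σ}`, `⊤` if no such `λ` exists. -/
def Dinf (ρ σ : Mat n) : EReal :=
  if ∃ c : ℝ, 0 ≤ c ∧ (c • σ - ρ).PosSemidef then
    ((Real.log (sInf {c : ℝ | 0 ≤ c ∧ (c • σ - ρ).PosSemidef}) : ℝ) : EReal)
  else ⊤

/-- Umegaki relative entropy `D(ρ‖σ) = Tr(ρ log ρ - ρ log σ)`, `⊤` if the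
support condition fails. -/
def DU (ρ σ : Mat n) : EReal :=
  if suppLe ρ σ then ((traceR (ρ * mlog ρ - ρ * mlog σ) : ℝ) : EReal) else ⊤

/-- The sandwiched matrix `σ^{(1-p)/(2p)} ρ σ^{(1-p)/(2p)}`; note that for
`p > 1` the exponent `(1-p)/(2p)` equals `-1/(2p')` with `1/p + 1/p' = 1`. -/
def sandwich (p : ℝ) (ρ σ : Mat n) : Mat n :=
  mpow σ ((1 - p)/(2*p)) * ρ * mpow σ ((1 - p)/(2*p))

/-- The sandwiched Rényi relative entropy `D_p(ρ‖σ)` for `p ∈ [1/2, ∞]`: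
for `p ∈ (1,∞)` it is `p' log ‖σ^{-1/(2p')} ρ σ^{-1/(2p')}‖_p
= (p-1)⁻¹ log Tr ((σ^{-1/(2p')} ρ σ^{-1/(2p')})^p)` when the support of `ρ` is
dominated by that of `σ` and `⊤` otherwise; for `p ∈ [1/2, 1)` it is
`(p-1)⁻¹ log Tr ((σ^{(1-p)/(2p)} ρ σ^{(1-p)/(2p)})^p)` (`⊤` when the trace
vanishes, i.e. when the honest value is `+∞`); `D_1` is the Umegaki relative
entropy and `D_∞` the max-relative entropy. -/
def Dp (p : ℝ≥0∞) (ρ σ : Mat n) : EReal :=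
  if p = ⊤ then Dinf ρ σ
  else if p = 1 then DU ρ σ
  else if 1 < p.toReal ∧ ¬ suppLe ρ σ then ⊤
  else if traceR (mpow (sandwich p.toReal ρ σ) p.toReal) = 0 then ⊤
  else (((p.toReal - 1)⁻¹ * Real.log (traceR (mpow (sandwich p.toReal ρ σ) p.toReal)) : ℝ) : EReal)

/-- `D_p(ρ‖S) = inf { D_p(ρ‖σ) | σ a density in S }`. -/
def DpSet (p : ℝ≥0∞) (ρ : Mat n) (S : Set (Mat n)) : EReal :=
  ⨅ σ ∈ {σ ∈ S | IsDensity σ}, Dp p ρ σ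

/-- `D_p(A‖S) = sup { D_p(ρ‖S) | ρ a density in A }`. -/
def DpRel (p : ℝ≥0∞) (A S : Set (Mat n)) : EReal :=
  ⨆ ρ ∈ {ρ ∈ A | IsDensity ρ}, DpSet p ρ S

open scoped Kronecker in
/-- The algebraic tensor product `N₁ ⊗ N₂ ⊆ M_{n₁} ⊗ M_{n₂} = M_{n₁ × n₂}`,
realized as the linear span of Kronecker products. -/
def tensorSpan {n₁ n₂ : Type*} [Fintype n₁] [DecidableEq n₁] [Fintype n₂] [DecidableEq n₂]
    (N₁ : Set (Mat n₁)) (N₂ : Set (Mat n₂)) : Set (Mat (n₁ × n₂)) :=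
  ↑(Submodule.span ℂ {z : Mat (n₁ × n₂) | ∃ x ∈ N₁, ∃ y ∈ N₂, z = x ⊗ₖ y})

/-- `D_{p,cb}(M‖N) = sup_k D_p(M_k ⊗ M ‖ M_k ⊗ N)`. -/
def DpCb (p : ℝ≥0∞) (N : Set (Mat n)) : EReal :=
  ⨆ k : ℕ, DpRel p Set.univ (tensorSpan (Set.univ : Set (Mat (Fin k))) N)

/-- `E` is the trace preserving conditional expectation onto `N`, i.e. the
orthogonal projection onto `N` with respect to the Hilbert–Schmidt inner
product `⟨x,y⟩ = Tr(x* y)`. -/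
def IsCondExp (N : Set (Mat n)) (E : Mat n →ₗ[ℂ] Mat n) : Prop :=
  (∀ x, E x ∈ N) ∧ (∀ x ∈ N, E x = x) ∧
    ∀ x y, y ∈ N → ((E x)ᴴ * y).trace = (xᴴ * y).trace

/-- The Pimsner–Popa index constant
`λ(M:N) = max {c ≥ 0 | c x ≤ E(x) for all x ≥ 0}`. -/
def ppIndex (E : Mat n →ₗ[ℂ] Mat n) : ℝ :=
  sSup {c : ℝ | 0 ≤ c ∧ ∀ x : Mat n, x.PosSemidef → (E x - c • x).PosSemidef}

/-- von Neumann entropy `H(ρ) = -Tr(ρ log ρ)`. -/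
def vnEntropy (ρ : Mat n) : ℝ := - traceR (ρ * mlog ρ)

/-- The amplification `id_{M_k} ⊗ Φ` acting on `M_k ⊗ M_n = M_{k × n}`,
applying `Φ` blockwise. -/
def ampFun (k : Type*) [Fintype k] [DecidableEq k] (Φ : Mat n →ₗ[ℂ] Mat n)
    (X : Mat (k × n)) : Mat (k × n) :=
  Matrix.of fun a b => Φ (Matrix.of fun s t => X (a.1, s) (b.1, t)) a.2 b.2

/-- Complete positivity: all amplifications `id_{M_k} ⊗ Φ` preserve positive
semidefiniteness. -/
def IsCP (Φ : Mat n →ₗ[ℂ] Mat n) : Prop :=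
  ∀ (k : ℕ) (X : Mat (Fin k × n)), X.PosSemidef → (ampFun (Fin k) Φ X).PosSemidef

/-- Completely positive and trace preserving. -/
def IsCPTP (Φ : Mat n →ₗ[ℂ] Mat n) : Prop :=
  IsCP Φ ∧ ∀ x : Mat n, (Φ x).trace = x.trace

/-!
For `y ∈ N` one has `Tr (ρ y) = Tr (E(ρ) y)`, and `N` contains `log σ` and the kernel projection of
`σ` for each self-adjoint `σ ∈ N`. Hence, as extended reals,
`D(ρ‖σ) = D(ρ‖E(ρ)) + D(E(ρ)‖σ)` for all densities `σ ∈ N`, which reduces the minimization to the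
positivity of relative entropy. That positivity is used in the quantitative form
`‖√A - √B‖₂² ≤ D(A‖B)` for `Tr A = Tr B`, which also identifies the case of equality. It comes from
pairing a scalar inequality with the doubly stochastic matrix `|⟨uᵢ, vⱼ⟩|²` built from eigenbases of
`A` and `B`.
-/

open scoped MatrixOrder

variable {A B : Mat n}

section Trace

lemma traceR_sub (A B : Mat n) : traceR (A - B) = traceR A - traceR B := by
  simp only [traceR, trace_sub, Complex.sub_re]

lemma traceR_mul_comm (A B : Mat n) : traceR (A * B) = traceR (B * A) := by
  rw [traceR, trace_mul_comm, traceR]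

lemma traceR_nonneg (hA : A.PosSemidef) : 0 ≤ traceR A :=
  (Complex.nonneg_iff.1 hA.trace_nonneg).1

lemma traceR_eq_zero_iff (hA : A.PosSemidef) : traceR A = 0 ↔ A = 0 := by
  have him : A.trace.im = 0 := (Complex.nonneg_iff.1 hA.trace_nonneg).2.symm
  rw [← hA.trace_eq_zero_iff, Complex.ext_iff, him, traceR]
  simp only [Complex.zero_re, Complex.zero_im, and_true]

lemma traceR_mul_nonneg (hA : A.PosSemidef) (hB : B.PosSemidef) : 0 ≤ traceR (A * B) := by
  obtain ⟨X, rfl⟩ := CStarAlgebra.nonneg_iff_eq_star_mul_self.1 hB.nonneg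
  rw [← mul_assoc, traceR_mul_comm, ← mul_assoc]
  exact traceR_nonneg (hA.mul_mul_conjTranspose_same X)

lemma traceR_mul_eq_zero_iff (hA : A.PosSemidef) (hB : B.PosSemidef) :
    traceR (A * B) = 0 ↔ A * B = 0 := by
  refine ⟨fun h => ?_, fun h => by rw [h, traceR, trace_zero, Complex.zero_re]⟩
  obtain ⟨X, rfl⟩ := CStarAlgebra.nonneg_iff_eq_star_mul_self.1 hA.nonneg
  obtain ⟨Y, rfl⟩ := CStarAlgebra.nonneg_iff_eq_star_mul_self.1 hB.nonneg
  have hcycle : traceR (star X * X * (star Y * Y)) = traceR ((X * Yᴴ)ᴴ * (X * Yᴴ)) := by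
    rw [← mul_assoc, traceR_mul_comm, conjTranspose_mul, conjTranspose_conjTranspose]
    simp only [star_eq_conjTranspose, mul_assoc]
  have hXY : X * star Y = 0 := by
    rwa [hcycle, traceR_eq_zero_iff (posSemidef_conjTranspose_mul_self _),
      conjTranspose_mul_self_eq_zero] at h
  rw [mul_assoc, ← mul_assoc X, hXY, zero_mul, mul_zero]

end Trace

section FunctionalCalculus

lemma continuousOn_spectrum (A : Mat n) (f : ℝ → ℝ) : ContinuousOn f (spectrum ℝ A) :=
  A.finite_real_spectrum.continuousOn f

lemma mul_cfc (hA : A.IsHermitian) (f : ℝ → ℝ) : A * cfc f A = cfc (fun x => x * f x) A := by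
  have hA' : IsSelfAdjoint A := hA
  rw [cfc_mul _ f A (continuousOn_spectrum A _) (continuousOn_spectrum A f), cfc_id' ℝ A]

lemma sqrt_eq_cfc_real_sqrt (hA : A.PosSemidef) : CFC.sqrt A = cfc Real.sqrt A := by
  rw [CFC.sqrt_eq_real_sqrt A hA.nonneg, cfcₙ_eq_cfc]

lemma isClosed_coe_starSubalgebra (N : StarSubalgebra ℂ (Mat n)) : IsClosed (N : Set (Mat n)) :=
  N.toSubalgebra.toSubmodule.closed_of_finiteDimensional

lemma cfc_mem_starSubalgebra {N : StarSubalgebra ℂ (Mat n)} (hA : A ∈ N) (f : ℝ → ℝ) :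
    cfc f A ∈ N :=
  have := isClosed_coe_starSubalgebra N
  cfc_mem f hA

lemma mlog_mem_starSubalgebra {N : StarSubalgebra ℂ (Mat n)} (hA : A ∈ N) : mlog A ∈ N :=
  cfc_mem_starSubalgebra hA Real.log

lemma negPart_mem_starSubalgebra {N : StarSubalgebra ℂ (Mat n)} (hA : A ∈ N) : A⁻ ∈ N :=
  have := isClosed_coe_starSubalgebra N
  cfcₙ_mem _ hA

end FunctionalCalculus

section KernelProjection

/-- The orthogonal projection onto the kernel of a Hermitian matrix, as a spectral projection. It
turns the support condition `suppLe` into a trace identity. -/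
def kernelProj (A : Mat n) : Mat n := cfc (Pi.single 0 1 : ℝ → ℝ) A

lemma posSemidef_kernelProj (A : Mat n) : (kernelProj A).PosSemidef := by
  have hsingle : (0 : ℝ → ℝ) ≤ Pi.single 0 1 := Pi.single_nonneg.2 zero_le_one
  exact (cfc_nonneg fun x _ => hsingle x).posSemidef

lemma kernelProj_mem_starSubalgebra {N : StarSubalgebra ℂ (Mat n)} (hA : A ∈ N) :
    kernelProj A ∈ N :=
  cfc_mem_starSubalgebra hA _

lemma mul_kernelProj (hA : A.IsHermitian) : A * kernelProj A = 0 := by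
  have hzero : (fun x : ℝ => x * (Pi.single 0 1 : ℝ → ℝ) x) = fun _ => 0 := by
    funext x
    rcases eq_or_ne x 0 with rfl | hx
    · exact zero_mul _
    · rw [Pi.single_eq_of_ne hx, mul_zero]
  rw [kernelProj, mul_cfc hA, hzero, cfc_const_zero]

lemma kernelProj_add_cfc_inv_mul (hA : A.IsHermitian) :
    kernelProj A + cfc (fun x : ℝ => x⁻¹) A * A = 1 := by
  have hA' : IsSelfAdjoint A := hA
  have hone : (fun x : ℝ => (Pi.single 0 1 : ℝ → ℝ) x + x * x⁻¹) = fun _ => 1 := by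
    funext x
    rcases eq_or_ne x 0 with rfl | hx
    · simp only [Pi.single_eq_same, zero_mul, add_zero]
    · rw [Pi.single_eq_of_ne hx, mul_inv_cancel₀ hx, zero_add]
  have hcomm : cfc (fun x : ℝ => x⁻¹) A * A = A * cfc (fun x : ℝ => x⁻¹) A := by
    simpa only [cfc_id' ℝ A] using (cfc_commute_cfc (fun x : ℝ => x⁻¹) (fun x => x) A).eq
  rw [hcomm, mul_cfc hA, kernelProj, ← cfc_add (a := A) _ _ (continuousOn_spectrum A _)
    (continuousOn_spectrum A _), hone, cfc_const_one ℝ A]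

lemma suppLe_iff_mul_kernelProj_eq_zero (hB : B.IsHermitian) :
    suppLe A B ↔ A * kernelProj B = 0 := by
  constructor
  · refine fun h => ext_of_mulVec_single fun i => ?_
    rw [← mulVec_mulVec, zero_mulVec]
    apply h
    rw [mulVec_mulVec, mul_kernelProj hB, zero_mulVec]
  · intro h v hv
    have hfix : kernelProj B *ᵥ v = v := by
      conv_rhs => rw [← one_mulVec v, ← kernelProj_add_cfc_inv_mul hB, add_mulVec,
        ← mulVec_mulVec, hv, mulVec_zero, add_zero]
    rw [← hfix, mulVec_mulVec, h, zero_mulVec]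

lemma suppLe_iff_traceR_mul_kernelProj_eq_zero (hA : A.PosSemidef) (hB : B.IsHermitian) :
    suppLe A B ↔ traceR (A * kernelProj B) = 0 := by
  rw [suppLe_iff_mul_kernelProj_eq_zero hB, traceR_mul_eq_zero_iff hA (posSemidef_kernelProj B)]

end KernelProjection

section SpectralOverlap

/-- The squared overlaps `|⟨uᵢ, vⱼ⟩|²` of the eigenbases of two Hermitian matrices. They turn
traces of products of functions of the two matrices into sums over pairs of eigenvalues. -/
def spectralOverlap (hA : A.IsHermitian) (hB : B.IsHermitian) (i j : n) : ℝ :=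
  Complex.normSq ((star (hA.eigenvectorUnitary : Mat n) * (hB.eigenvectorUnitary : Mat n)) i j)

lemma spectralOverlap_nonneg (hA : A.IsHermitian) (hB : B.IsHermitian) (i j : n) :
    0 ≤ spectralOverlap hA hB i j :=
  Complex.normSq_nonneg _

lemma traceR_diagonal_mul_mul_diagonal_mul_star (a b : n → ℝ) (W : Mat n) :
    traceR (diagonal (RCLike.ofReal ∘ a) * W * (diagonal (RCLike.ofReal ∘ b) * star W)) =
      ∑ i, ∑ j, a i * b j * Complex.normSq (W i j) := by
  rw [traceR, Matrix.trace, Complex.re_sum]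
  refine Finset.sum_congr rfl fun i _ => ?_
  rw [diag_apply, mul_apply, Complex.re_sum]
  refine Finset.sum_congr rfl fun j _ => ?_
  have hentry : (a i : ℂ) * W i j * (b j * star (W i j)) =
      ((a i * b j * Complex.normSq (W i j) : ℝ) : ℂ) := by
    push_cast
    rw [← Complex.mul_conj, Complex.star_def]
    ring
  simp only [diagonal_mul, star_apply, Function.comp_apply]
  exact (congrArg Complex.re hentry).trans (Complex.ofReal_re _)

theorem traceR_cfc_mul_cfc_eq_sum (hA : A.IsHermitian) (hB : B.IsHermitian) (f g : ℝ → ℝ) :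
    traceR (cfc f A * cfc g B) =
      ∑ i, ∑ j, f (hA.eigenvalues i) * g (hB.eigenvalues j) * spectralOverlap hA hB i j := by
  refine Eq.trans ?_ (traceR_diagonal_mul_mul_diagonal_mul_star (f ∘ hA.eigenvalues)
    (g ∘ hB.eigenvalues) (star (hA.eigenvectorUnitary : Mat n) * hB.eigenvectorUnitary))
  rw [hA.cfc_eq, hB.cfc_eq, IsHermitian.cfc, IsHermitian.cfc, Unitary.conjStarAlgAut_apply,
    Unitary.conjStarAlgAut_apply, star_mul, star_star, mul_assoc, mul_assoc, traceR_mul_comm]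
  simp only [mul_assoc]

lemma traceR_cfc_eq_sum_left (hA : A.IsHermitian) (hB : B.IsHermitian) (f : ℝ → ℝ) :
    traceR (cfc f A) = ∑ i, ∑ j, f (hA.eigenvalues i) * spectralOverlap hA hB i j := by
  have hB' : IsSelfAdjoint B := hB
  simpa only [cfc_const_one ℝ B, mul_one] using traceR_cfc_mul_cfc_eq_sum hA hB f fun _ => 1

lemma traceR_cfc_eq_sum_right (hA : A.IsHermitian) (hB : B.IsHermitian) (g : ℝ → ℝ) :
    traceR (cfc g B) = ∑ i, ∑ j, g (hB.eigenvalues j) * spectralOverlap hA hB i j := by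
  have hA' : IsSelfAdjoint A := hA
  simpa only [cfc_const_one ℝ A, one_mul] using traceR_cfc_mul_cfc_eq_sum hA hB (fun _ => 1) g

lemma traceR_eq_sum_left (hA : A.IsHermitian) (hB : B.IsHermitian) :
    traceR A = ∑ i, ∑ j, hA.eigenvalues i * spectralOverlap hA hB i j := by
  have hA' : IsSelfAdjoint A := hA
  simpa only [cfc_id' ℝ A] using traceR_cfc_eq_sum_left hA hB fun x => x

lemma traceR_eq_sum_right (hA : A.IsHermitian) (hB : B.IsHermitian) :
    traceR B = ∑ i, ∑ j, hB.eigenvalues j * spectralOverlap hA hB i j := by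
  have hB' : IsSelfAdjoint B := hB
  simpa only [cfc_id' ℝ B] using traceR_cfc_eq_sum_right hA hB fun x => x

lemma traceR_mul_cfc_eq_sum (hA : A.IsHermitian) (hB : B.IsHermitian) (g : ℝ → ℝ) :
    traceR (A * cfc g B) =
      ∑ i, ∑ j, hA.eigenvalues i * g (hB.eigenvalues j) * spectralOverlap hA hB i j := by
  have hA' : IsSelfAdjoint A := hA
  simpa only [cfc_id' ℝ A] using traceR_cfc_mul_cfc_eq_sum hA hB (fun x => x) g

lemma eigenvalues_mul_spectralOverlap_eq_zero (hA : A.PosSemidef) (hB : B.IsHermitian)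
    (hAB : suppLe A B) (i : n) {j : n} (hj : hB.eigenvalues j = 0) :
    hA.isHermitian.eigenvalues i * spectralOverlap hA.isHermitian hB i j = 0 := by
  have hsum := (suppLe_iff_traceR_mul_kernelProj_eq_zero hA hB).1 hAB
  rw [kernelProj, traceR_mul_cfc_eq_sum hA.isHermitian hB, ← Finset.sum_product',
    Finset.sum_eq_zero_iff_of_nonneg] at hsum
  · simpa only [hj, Pi.single_eq_same, mul_one] using hsum (i, j) (Finset.mem_univ _)
  · refine fun p _ => mul_nonneg (mul_nonneg (hA.eigenvalues_nonneg p.1) ?_)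
      (spectralOverlap_nonneg _ _ _ _)
    exact (Pi.single_nonneg.2 zero_le_one : (0 : ℝ → ℝ) ≤ Pi.single 0 1) _

end SpectralOverlap

section RelativeEntropy

lemma sq_sqrt_sub_sqrt_le {a b : ℝ} (ha : 0 ≤ a) (hb : 0 ≤ b) (hab : b = 0 → a = 0) :
    (√a - √b) ^ 2 ≤ a * Real.log a - a * Real.log b - a + b := by
  rcases ha.eq_or_lt with rfl | ha
  · simp [Real.sq_sqrt hb]
  have hb : 0 < b := hb.lt_of_ne' fun h => ha.ne' (hab h)
  have hlog : Real.log (√b / √a) ≤ √b / √a - 1 := Real.log_le_sub_one_of_pos (by positivity)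
  rw [Real.log_div (by positivity) (by positivity), Real.log_sqrt ha.le, Real.log_sqrt hb.le]
    at hlog
  have hmul : a * (√b / √a) = √a * √b := by
    rw [mul_div_left_comm, Real.div_sqrt, mul_comm]
  have hscaled := mul_le_mul_of_nonneg_left hlog ha.le
  rw [mul_sub a (√b / √a), hmul] at hscaled
  rw [sub_sq, Real.sq_sqrt ha.le, Real.sq_sqrt hb.le]
  linarith

lemma traceR_sq_sqrt_sub_sqrt (hA : A.PosSemidef) (hB : B.PosSemidef) :
    traceR ((CFC.sqrt A - CFC.sqrt B)ᴴ * (CFC.sqrt A - CFC.sqrt B)) =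
      ∑ i, ∑ j, (√(hA.isHermitian.eigenvalues i) - √(hB.isHermitian.eigenvalues j)) ^ 2 *
        spectralOverlap hA.isHermitian hB.isHermitian i j := by
  have hsq : traceR ((CFC.sqrt A - CFC.sqrt B)ᴴ * (CFC.sqrt A - CFC.sqrt B)) =
      traceR A - 2 * traceR (CFC.sqrt A * CFC.sqrt B) + traceR B := by
    rw [((CFC.sqrt_nonneg A).posSemidef.isHermitian.sub
      (CFC.sqrt_nonneg B).posSemidef.isHermitian).eq, sub_mul, mul_sub, mul_sub,
      CFC.sqrt_mul_sqrt_self A hA.nonneg, CFC.sqrt_mul_sqrt_self B hB.nonneg]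
    simp only [traceR_sub]
    rw [traceR_mul_comm (CFC.sqrt B)]
    ring
  rw [hsq, sqrt_eq_cfc_real_sqrt hA, sqrt_eq_cfc_real_sqrt hB,
    traceR_cfc_mul_cfc_eq_sum hA.isHermitian hB.isHermitian,
    traceR_eq_sum_left hA.isHermitian hB.isHermitian,
    traceR_eq_sum_right hA.isHermitian hB.isHermitian]
  simp only [Finset.mul_sum, ← Finset.sum_sub_distrib, ← Finset.sum_add_distrib]
  refine Finset.sum_congr rfl fun i _ => Finset.sum_congr rfl fun j _ => ?_
  rw [sub_sq, Real.sq_sqrt (hA.eigenvalues_nonneg i), Real.sq_sqrt (hB.eigenvalues_nonneg j)]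
  ring

lemma traceR_mul_mlog_sub_mul_mlog (hA : A.IsHermitian) (hB : B.IsHermitian) :
    traceR (A * mlog A - A * mlog B) - traceR A + traceR B =
      ∑ i, ∑ j, (hA.eigenvalues i * Real.log (hA.eigenvalues i) -
        hA.eigenvalues i * Real.log (hB.eigenvalues j) - hA.eigenvalues i + hB.eigenvalues j) *
        spectralOverlap hA hB i j := by
  rw [traceR_sub, mlog, mlog, mul_cfc hA, traceR_cfc_eq_sum_left hA hB,
    traceR_mul_cfc_eq_sum hA hB, traceR_eq_sum_left hA hB, traceR_eq_sum_right hA hB]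
  simp only [← Finset.sum_sub_distrib, ← Finset.sum_add_distrib, sub_mul, add_mul]

theorem traceR_sq_sqrt_sub_sqrt_le (hA : A.PosSemidef) (hB : B.PosSemidef) (hAB : suppLe A B) :
    traceR ((CFC.sqrt A - CFC.sqrt B)ᴴ * (CFC.sqrt A - CFC.sqrt B)) ≤
      traceR (A * mlog A - A * mlog B) - traceR A + traceR B := by
  rw [traceR_sq_sqrt_sub_sqrt hA hB, traceR_mul_mlog_sub_mul_mlog hA.isHermitian hB.isHermitian]
  refine Finset.sum_le_sum fun i _ => Finset.sum_le_sum fun j _ => ?_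
  rcases eq_or_ne (spectralOverlap hA.isHermitian hB.isHermitian i j) 0 with hw | hw
  · rw [hw, mul_zero, mul_zero]
  · refine mul_le_mul_of_nonneg_right (sq_sqrt_sub_sqrt_le (hA.eigenvalues_nonneg i)
      (hB.eigenvalues_nonneg j) fun hj => ?_) (spectralOverlap_nonneg _ _ _ _)
    have := eigenvalues_mul_spectralOverlap_eq_zero hA hB.isHermitian hAB i hj
    exact (mul_eq_zero.1 this).resolve_right hw

theorem DU_nonneg (hA : A.PosSemidef) (hB : B.PosSemidef) (htr : traceR B ≤ traceR A) :
    0 ≤ DU A B := by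
  rw [DU]
  split_ifs with hAB
  · have hsq := traceR_nonneg
      (posSemidef_conjTranspose_mul_self (CFC.sqrt A - CFC.sqrt B))
    have hklein := traceR_sq_sqrt_sub_sqrt_le hA hB hAB
    exact EReal.coe_nonneg.2 (by linarith)
  · exact le_top

theorem eq_of_DU_eq_zero (hA : A.PosSemidef) (hB : B.PosSemidef) (htr : traceR B ≤ traceR A)
    (h : DU A B = 0) : A = B := by
  rw [DU] at h
  split_ifs at h with hAB
  swap
  · exact absurd h EReal.top_ne_zero
  have hpos := posSemidef_conjTranspose_mul_self (CFC.sqrt A - CFC.sqrt B)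
  have hsq : traceR ((CFC.sqrt A - CFC.sqrt B)ᴴ * (CFC.sqrt A - CFC.sqrt B)) = 0 := by
    have hklein := traceR_sq_sqrt_sub_sqrt_le hA hB hAB
    rw [EReal.coe_eq_zero.1 h] at hklein
    exact le_antisymm (by linarith) (traceR_nonneg hpos)
  rw [traceR_eq_zero_iff hpos, conjTranspose_mul_self_eq_zero, sub_eq_zero] at hsq
  rw [← CFC.sqrt_mul_sqrt_self A hA.nonneg, hsq, CFC.sqrt_mul_sqrt_self B hB.nonneg]

lemma Dp_one (A B : Mat n) : Dp 1 A B = DU A B := by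
  rw [Dp, if_neg ENNReal.one_ne_top, if_pos rfl]

end RelativeEntropy

namespace IsCondExp

variable {N : StarSubalgebra ℂ (Mat n)} {E : Mat n →ₗ[ℂ] Mat n} {ρ σ : Mat n}

lemma trace_mul_apply (hE : IsCondExp (N : Set (Mat n)) E) (x : Mat n) {y : Mat n} (hy : y ∈ N) :
    (y * E x).trace = (y * x).trace := by
  have h := congrArg star (hE.2.2 x yᴴ (star_mem hy))
  simpa only [← trace_conjTranspose, conjTranspose_mul, conjTranspose_conjTranspose] using h

lemma traceR_apply_mul (hE : IsCondExp (N : Set (Mat n)) E) (x : Mat n) {y : Mat n} (hy : y ∈ N) :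
    traceR (E x * y) = traceR (x * y) := by
  rw [traceR_mul_comm, traceR, hE.trace_mul_apply x hy, ← traceR, traceR_mul_comm]

lemma trace_apply (hE : IsCondExp (N : Set (Mat n)) E) (x : Mat n) : (E x).trace = x.trace := by
  simpa only [one_mul] using hE.trace_mul_apply x (one_mem N)

lemma map_conjTranspose (hE : IsCondExp (N : Set (Mat n)) E) (x : Mat n) : E xᴴ = (E x)ᴴ := by
  have hmem : E xᴴ - (E x)ᴴ ∈ N := sub_mem (hE.1 _) (star_mem (hE.1 x))
  have horth (y : Mat n) (hy : y ∈ N) : (y * (E xᴴ - (E x)ᴴ)).trace = 0 := by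
    rw [mul_sub, trace_sub, hE.trace_mul_apply _ hy, trace_mul_comm y (E x)ᴴ, hE.2.2 x y hy,
      trace_mul_comm, sub_self]
  exact sub_eq_zero.1 (trace_conjTranspose_mul_self_eq_zero_iff.1 (horth _ (star_mem hmem)))

lemma isHermitian_apply (hE : IsCondExp (N : Set (Mat n)) E) (hρ : ρ.IsHermitian) :
    (E ρ).IsHermitian := by
  rw [IsHermitian, ← hE.map_conjTranspose, hρ.eq]

lemma posSemidef_apply (hE : IsCondExp (N : Set (Mat n)) E) (hρ : ρ.PosSemidef) :
    (E ρ).PosSemidef := by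
  have hself : IsSelfAdjoint (E ρ) := hE.isHermitian_apply hρ.isHermitian
  have hneg : (E ρ)⁻.PosSemidef := (CFC.negPart_nonneg (E ρ)).posSemidef
  have hmul : E ρ * (E ρ)⁻ = -((E ρ)⁻ * (E ρ)⁻) := by
    nth_rw 1 [← CFC.posPart_sub_negPart (E ρ)]
    rw [sub_mul, CFC.posPart_mul_negPart, zero_sub]
  have htr : 0 ≤ traceR (E ρ * (E ρ)⁻) := by
    rw [hE.traceR_apply_mul ρ (negPart_mem_starSubalgebra (hE.1 ρ))]
    exact traceR_mul_nonneg hρ hneg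
  have hzero : traceR ((E ρ)⁻ * (E ρ)⁻) = 0 := by
    rw [hmul, ← zero_sub, traceR_sub, traceR, trace_zero, Complex.zero_re, zero_sub] at htr
    exact le_antisymm (neg_nonneg.1 htr) (traceR_mul_nonneg hneg hneg)
  rw [traceR_mul_eq_zero_iff hneg hneg] at hzero
  have : (E ρ)⁻ = 0 := by
    apply conjTranspose_mul_self_eq_zero.1
    rwa [hneg.isHermitian.eq]
  exact ((CFC.negPart_eq_zero_iff (E ρ)).1 this).posSemidef

lemma isDensity_apply (hE : IsCondExp (N : Set (Mat n)) E) (hρ : IsDensity ρ) :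
    IsDensity (E ρ) :=
  ⟨hE.posSemidef_apply hρ.1, (hE.trace_apply ρ).trans hρ.2⟩

lemma suppLe_apply_iff (hE : IsCondExp (N : Set (Mat n)) E) (hρ : ρ.PosSemidef) (hσN : σ ∈ N)
    (hσ : σ.IsHermitian) : suppLe (E ρ) σ ↔ suppLe ρ σ := by
  rw [suppLe_iff_traceR_mul_kernelProj_eq_zero (hE.posSemidef_apply hρ) hσ,
    suppLe_iff_traceR_mul_kernelProj_eq_zero hρ hσ,
    hE.traceR_apply_mul ρ (kernelProj_mem_starSubalgebra hσN)]

theorem DU_apply (hE : IsCondExp (N : Set (Mat n)) E) (hρ : ρ.PosSemidef) :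
    DU ρ (E ρ) = ((vnEntropy (E ρ) - vnEntropy ρ : ℝ) : EReal) := by
  have hsupp : suppLe ρ (E ρ) :=
    (hE.suppLe_apply_iff hρ (hE.1 ρ) (hE.isHermitian_apply hρ.isHermitian)).1 fun _ hv => hv
  rw [DU, if_pos hsupp, traceR_sub,
    ← hE.traceR_apply_mul ρ (mlog_mem_starSubalgebra (hE.1 ρ)), vnEntropy, vnEntropy,
    neg_sub_neg]

theorem DU_eq_DU_apply_add (hE : IsCondExp (N : Set (Mat n)) E) (hρ : ρ.PosSemidef)
    (hσN : σ ∈ N) (hσ : σ.IsHermitian) : DU ρ σ = DU ρ (E ρ) + DU (E ρ) σ := by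
  rw [hE.DU_apply hρ]
  by_cases hsupp : suppLe ρ σ
  · rw [DU, DU, if_pos hsupp, if_pos ((hE.suppLe_apply_iff hρ hσN hσ).2 hsupp), ← EReal.coe_add,
      traceR_sub, traceR_sub, hE.traceR_apply_mul ρ (mlog_mem_starSubalgebra hσN),
      vnEntropy, vnEntropy]
    congr 1
    ring
  · rw [DU, DU, if_neg hsupp, if_neg (hsupp ∘ (hE.suppLe_apply_iff hρ hσN hσ).1),
      EReal.coe_add_top]

theorem DU_apply_le (hE : IsCondExp (N : Set (Mat n)) E) (hρ : IsDensity ρ) (hσN : σ ∈ N)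
    (hσ : IsDensity σ) : DU ρ (E ρ) ≤ DU ρ σ := by
  have hdens := hE.isDensity_apply hρ
  rw [hE.DU_eq_DU_apply_add hρ.1 hσN hσ.1.isHermitian]
  exact le_add_of_nonneg_right
    (DU_nonneg hdens.1 hσ.1 (by rw [traceR, traceR, hσ.2, hdens.2]))

theorem eq_apply_of_DU_eq (hE : IsCondExp (N : Set (Mat n)) E) (hρ : IsDensity ρ) (hσN : σ ∈ N)
    (hσ : IsDensity σ) (h : DU ρ σ = DU ρ (E ρ)) : σ = E ρ := by
  have hdens := hE.isDensity_apply hρ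
  have htr : traceR σ ≤ traceR (E ρ) := by rw [traceR, traceR, hσ.2, hdens.2]
  rw [hE.DU_eq_DU_apply_add hρ.1 hσN hσ.1.isHermitian, hE.DU_apply hρ.1] at h
  by_contra hne
  have hpos : 0 < DU (E ρ) σ := (DU_nonneg hdens.1 hσ.1 htr).lt_of_ne' fun hzero =>
    hne (eq_of_DU_eq_zero hdens.1 hσ.1 htr hzero).symm
  have hlt := EReal.add_lt_add_left_coe hpos (vnEntropy (E ρ) - vnEntropy ρ)
  rw [add_zero, h] at hlt
  exact lt_irrefl _ hlt

theorem DpSet_one (hE : IsCondExp (N : Set (Mat n)) E) (hρ : IsDensity ρ) :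
    DpSet 1 ρ (N : Set (Mat n)) = DU ρ (E ρ) := by
  simp only [DpSet, Dp_one]
  exact le_antisymm (iInf₂_le (E ρ) ⟨hE.1 ρ, hE.isDensity_apply hρ⟩)
    (le_iInf₂ fun _ hσ => hE.DU_apply_le hρ hσ.1 hσ.2)

end IsCondExp

theorem statement3_general (N : StarSubalgebra ℂ (Mat n)) (E : Mat n →ₗ[ℂ] Mat n)
    (hE : IsCondExp (N : Set (Mat n)) E) (ρ : Mat n) (hρ : IsDensity ρ) :
    DpSet 1 ρ (N : Set (Mat n)) = Dp 1 ρ (E ρ) ∧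
    Dp 1 ρ (E ρ) = ((vnEntropy (E ρ) - vnEntropy ρ : ℝ) : EReal) ∧
    ∀ σ : Mat n, σ ∈ (N : Set (Mat n)) → IsDensity σ →
      Dp 1 ρ σ = DpSet 1 ρ (N : Set (Mat n)) → σ = E ρ := by
  rw [hE.DpSet_one hρ, Dp_one]
  refine ⟨rfl, hE.DU_apply hρ.1, fun σ hσN hσ hmin => ?_⟩
  rw [Dp_one] at hmin
  exact hE.eq_apply_of_DU_eq hρ hσN hσ hmin

/-- `D(ρ‖N) = D(ρ‖E(ρ)) = H(E(ρ)) - H(ρ)`, and `E(ρ)` is the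
unique density in `N` achieving the infimum `D(ρ‖N)`. -/
theorem statement3 {m : ℕ} (N : StarSubalgebra ℂ (Mat (Fin m)))
    (E : Mat (Fin m) →ₗ[ℂ] Mat (Fin m)) (hE : IsCondExp (N : Set (Mat (Fin m))) E)
    (ρ : Mat (Fin m)) (hρ : IsDensity ρ) :
    DpSet 1 ρ (N : Set (Mat (Fin m))) = Dp 1 ρ (E ρ) ∧
    Dp 1 ρ (E ρ) = ((vnEntropy (E ρ) - vnEntropy ρ : ℝ) : EReal) ∧
    ∀ σ : Mat (Fin m), σ ∈ (N : Set (Mat (Fin m))) → IsDensity σ →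
      Dp 1 ρ σ = DpSet 1 ρ (N : Set (Mat (Fin m))) → σ = E ρ :=
  statement3_general N E hE ρ hρ

end GJL
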